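/- Let F₄ be the finite field with four elements. A function f : F₄ × F₄ → F₄ is a local permutation polynomial over F₄ if and only if exactly one of the following holds: (i) there exist s₀₀, s₀₁, s₀₂, s₁₀, s₂₀ ∈ F₄ with s₀₁³ + s₀₂³ = 1 and s₁₀³ + s₂₀³ = 1 such that f(x,y) = s₂₀x² + s₀₂y² + s₁₀x + s₀₁y + s₀₀ for all x, y; or (ii) there exist s₀₀, s₀₂, s₁₂, s₂₀, s₂₁, s₂₂ ∈ F₄ with s₂₂³ = s₂₁³ = s₁₂³ = 1, s₂₀(s₂₀s₂₂ + s₂₁²) = 0 and s₀₂(s₀₂s₂₂ + s₁₂²) = 0 such that f(x,y) = (s₂₂xy + s₂₁x + s₁₂y + s₁₂s₂₁s₂₂²)xy + s₂₀x² + s₀₂y² + (s₂₀s₂₂ + s₂₁²)s₁₂s₂₂x + (s₀₂s₂₂ + s₁₂²)s₂₁s₂₂y + s₀₀ for all x, y. Moreover, there are exactly 144 LPPs of type (i) and exactly 432 LPPs of type (ii). -/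

import Mathlib

/-- The field with four elements. -/
abbrev F₄ : Type := GaloisField 2 2

/-- `f : F × F → F` is a local permutation polynomial if both sections
`x ↦ f (x, a)` and `x ↦ f (a, x)` are bijections of `F` for every `a`. -/
def IsLPP {F : Type*} (f : F × F → F) : Prop :=
  ∀ a : F, Function.Bijective (fun x => f (x, a)) ∧ Function.Bijective (fun x => f (a, x))

/-- Type (i): LPPs over `F₄` with separate variables, of the form
`s₂₀x² + s₀₂y² + s₁₀x + s₀₁y + s₀₀` with `s₀₁³ + s₀₂³ = 1 = s₁₀³ + s₂₀³`. -/
def TypeI (f : F₄ × F₄ → F₄) : Prop :=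
  ∃ s₀₀ s₀₁ s₀₂ s₁₀ s₂₀ : F₄,
    s₀₁ ^ 3 + s₀₂ ^ 3 = 1 ∧ s₁₀ ^ 3 + s₂₀ ^ 3 = 1 ∧
    ∀ x y : F₄, f (x, y) = s₂₀ * x ^ 2 + s₀₂ * y ^ 2 + s₁₀ * x + s₀₁ * y + s₀₀

/-- Type (ii): LPPs over `F₄` of degree four. -/
def TypeII (f : F₄ × F₄ → F₄) : Prop :=
  ∃ s₀₀ s₀₂ s₁₂ s₂₀ s₂₁ s₂₂ : F₄,
    s₂₂ ^ 3 = 1 ∧ s₂₁ ^ 3 = 1 ∧ s₁₂ ^ 3 = 1 ∧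
    s₂₀ * (s₂₀ * s₂₂ + s₂₁ ^ 2) = 0 ∧ s₀₂ * (s₀₂ * s₂₂ + s₁₂ ^ 2) = 0 ∧
    ∀ x y : F₄, f (x, y) =
      (s₂₂ * x * y + s₂₁ * x + s₁₂ * y + s₁₂ * s₂₁ * s₂₂ ^ 2) * x * y +
        s₂₀ * x ^ 2 + s₀₂ * y ^ 2 +
        (s₂₀ * s₂₂ + s₂₁ ^ 2) * s₁₂ * s₂₂ * x +
        (s₀₂ * s₂₂ + s₁₂ ^ 2) * s₂₁ * s₂₂ * y + s₀₀

/-!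
Over a finite field with `q > 2` elements every bivariate function is a unique polynomial of degree
less than `q` in each variable. The values of a bijective section sum to `0`, while the values of a
polynomial of degree less than `q` sum to minus its coefficient of degree `q - 1`, so an LPP has
degree at most `q - 2` in each variable: for `q = 4` it is given by a `3 × 3` matrix `s`.

In characteristic two, `c₀ + c₁ x + c₂ x²` is injective iff exactly one of `c₁`, `c₂` vanishes.
Hence `s` gives an LPP iff the quadratics with coefficients in rows `1` and `2` of `s` have
complementary zero sets, and likewise for columns `1` and `2`. Then the product of the two
quadratics vanishes everywhere, and reducing it with `a⁴ = a` yields four bilinear relations between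
the rows. These force type (i) when `s₂₂ = 0` and type (ii) when `s₂₂ ≠ 0`. Since the coefficients
are unique, the types exclude each other and it suffices to count matrices: `4 · 6 · 6` of type (i),
and `4 · 3³ · 2²` of type (ii), where `s₂₀` is `0` or `(s₂₂ s₂₁)²` and `s₀₂` is `0` or `(s₂₂ s₁₂)²`.
-/

open Function Matrix

section PolyEval

variable {R : Type*} [CommRing R] {m n : ℕ}

/-- The polynomial function `x ↦ ∑ i, c i * x ^ i` of degree less than `n` with coefficients `c`. -/
def polyEval (c : Fin n → R) (x : R) : R :=
  ∑ i, c i * x ^ (i : ℕ)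

/-- The bivariate polynomial function `(x, y) ↦ ∑ i j, s i j * x ^ i * y ^ j`, written as a
polynomial in `x` whose coefficients are polynomials in `y`. -/
def bipolyEval (s : Matrix (Fin m) (Fin n) R) (p : R × R) : R :=
  polyEval (fun i => polyEval (s i) p.2) p.1

/-- The polynomials with coefficients `c` and `d` have complementary zero sets. -/
def ComplementaryZeros (c d : Fin n → R) : Prop :=
  ∀ a, polyEval c a = 0 ↔ polyEval d a ≠ 0

theorem polyEval_sub (c d : Fin n → R) (x : R) :
    polyEval (c - d) x = polyEval c x - polyEval d x := by
  simp [polyEval, sub_mul]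

theorem polyEval_eq_polyEval_castSucc {c : Fin (n + 1) → R} (hc : c (Fin.last n) = 0) :
    polyEval c = polyEval fun i : Fin n => c i.castSucc := by
  funext x
  simp [polyEval, Fin.sum_univ_castSucc, hc]

theorem polyEval_fin_three (c : Fin 3 → R) (x : R) :
    polyEval c x = c 0 + c 1 * x + c 2 * x ^ 2 := by
  simp [polyEval, Fin.sum_univ_three]

theorem polyEval_fin_four (c : Fin 4 → R) (x : R) :
    polyEval c x = c 0 + c 1 * x + c 2 * x ^ 2 + c 3 * x ^ 3 := by
  simp [polyEval, Fin.sum_univ_four]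

theorem bipolyEval_transpose (s : Matrix (Fin m) (Fin n) R) (x y : R) :
    bipolyEval sᵀ (y, x) = bipolyEval s (x, y) := by
  simp only [bipolyEval, polyEval, transpose_apply, Finset.sum_mul]
  rw [Finset.sum_comm]
  simp only [mul_right_comm]

theorem isLPP_bipolyEval_transpose {s : Matrix (Fin n) (Fin n) R} :
    IsLPP (bipolyEval sᵀ) ↔ IsLPP (bipolyEval s) := by
  simp only [IsLPP, bipolyEval_transpose, and_comm]

theorem polyEval_injective [IsDomain R] [Fintype R] (hn : n ≤ Fintype.card R) :
    Injective (polyEval : (Fin n → R) → R → R) := by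
  intro c d hcd
  obtain ⟨node⟩ : Nonempty (Fin n ↪ R) := Embedding.nonempty_of_card_le (by simpa using hn)
  refine sub_eq_zero.mp
    (eq_zero_of_forall_index_sum_mul_pow_eq_zero node.injective fun j => ?_)
  exact (polyEval_sub c d (node j)).trans (sub_eq_zero.mpr (congrFun hcd (node j)))

theorem bipolyEval_injective [IsDomain R] [Fintype R] (hm : m ≤ Fintype.card R)
    (hn : n ≤ Fintype.card R) :
    Injective (bipolyEval : Matrix (Fin m) (Fin n) R → R × R → R) := by
  intro s t hst
  have coeffs_eq (y : R) : (fun i => polyEval (s i) y) = fun i => polyEval (t i) y :=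
    polyEval_injective hm (funext fun x => congrFun hst (x, y))
  exact funext fun i => polyEval_injective hn (funext fun y => congrFun (coeffs_eq y) i)

theorem bipolyEval_surjective [IsDomain R] [Fintype R] (hn : Fintype.card R = n) :
    Surjective (bipolyEval : Matrix (Fin n) (Fin n) R → R × R → R) := by
  classical
  refine ((Fintype.bijective_iff_injective_and_card _).mpr
    ⟨bipolyEval_injective hn.ge hn.ge, ?_⟩).surjective
  calc Fintype.card (Fin n → Fin n → R) = Fintype.card (R × R → R) := by simp [hn, pow_mul]

end PolyEval

section FiniteField

variable {F : Type*} [Field F] [Fintype F] {n : ℕ}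

theorem sum_pow_card_sub_one_eq_neg_one : ∑ x : F, x ^ (Fintype.card F - 1) = -1 := by
  have card_sub_one_ne_zero : Fintype.card F - 1 ≠ 0 :=
    (Nat.sub_pos_of_lt Fintype.one_lt_card).ne'
  have sum_indicator : ∑ x : F, (1 - x ^ (Fintype.card F - 1)) = 1 := by
    rw [Finset.sum_eq_single 0]
    · simp [card_sub_one_ne_zero]
    · intro x _ hx
      rw [FiniteField.pow_card_sub_one_eq_one x hx, sub_self]
    · simp
  rw [Finset.sum_sub_distrib, Finset.sum_const, Finset.card_univ, nsmul_one,
    FiniteField.cast_card_eq_zero, zero_sub] at sum_indicator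
  exact neg_eq_iff_eq_neg.mp sum_indicator

theorem sum_polyEval_eq_neg_last (hn : Fintype.card F = n + 1) (c : Fin (n + 1) → F) :
    ∑ x, polyEval c x = -c (Fin.last n) := by
  have sum_top : ∑ x : F, x ^ n = -1 := by
    simpa [hn] using sum_pow_card_sub_one_eq_neg_one (F := F)
  have sum_lower (i : Fin n) : ∑ x : F, x ^ (i : ℕ) = 0 :=
    FiniteField.sum_pow_lt_card_sub_one F i (by simp [hn])
  simp only [polyEval]
  rw [Finset.sum_comm]
  simp [Fin.sum_univ_castSucc, ← Finset.mul_sum, sum_top, sum_lower]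

theorem last_eq_zero_of_bijective_polyEval (hn : Fintype.card F = n + 1) (one_lt : 1 < n)
    {c : Fin (n + 1) → F} (hc : Bijective (polyEval c)) : c (Fin.last n) = 0 := by
  have sum_univ_eq_zero : ∑ x : F, x = 0 := by
    simpa using FiniteField.sum_pow_lt_card_sub_one F 1 (by simpa [hn] using one_lt)
  rw [← neg_eq_zero, ← sum_polyEval_eq_neg_last hn, hc.sum_comp fun x => x, sum_univ_eq_zero]

theorem last_row_eq_zero_of_isLPP (hn : Fintype.card F = n + 1) (one_lt : 1 < n)
    {s : Matrix (Fin (n + 1)) (Fin (n + 1)) F} (hs : IsLPP (bipolyEval s)) :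
    s (Fin.last n) = 0 := by
  refine polyEval_injective hn.ge (funext fun y => ?_)
  calc polyEval (s (Fin.last n)) y = 0 :=
        last_eq_zero_of_bijective_polyEval (c := fun i => polyEval (s i) y) hn one_lt (hs y).1
    _ = polyEval 0 y := by simp [polyEval]

theorem exists_bipolyEval_eq_of_isLPP (hn : Fintype.card F = n + 1) (one_lt : 1 < n)
    {f : F × F → F} (hf : IsLPP f) : ∃ s : Matrix (Fin n) (Fin n) F, bipolyEval s = f := by
  obtain ⟨t, rfl⟩ := bipolyEval_surjective hn f
  have last_row : t (Fin.last n) = 0 := last_row_eq_zero_of_isLPP hn one_lt hf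
  have last_column : tᵀ (Fin.last n) = 0 :=
    last_row_eq_zero_of_isLPP hn one_lt (isLPP_bipolyEval_transpose.mpr hf)
  refine ⟨t.submatrix Fin.castSucc Fin.castSucc, funext fun p => ?_⟩
  simp only [bipolyEval]
  rw [polyEval_eq_polyEval_castSucc (by simp [last_row, polyEval])]
  refine congrArg (polyEval · p.1) (funext fun i => ?_)
  exact congrFun (polyEval_eq_polyEval_castSucc (congrFun last_column i.castSucc)).symm p.2

end FiniteField

section CharTwo

variable {F : Type*} [Field F] [CharP F 2]

theorem injective_polyEval_fin_three_iff {c : Fin 3 → F} :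
    Injective (polyEval c) ↔ (c 1 = 0 ↔ c 2 ≠ 0) := by
  constructor
  · intro hc
    have not_both_zero : ¬(c 1 = 0 ∧ c 2 = 0) := fun ⟨h₁, h₂⟩ =>
      zero_ne_one (hc (by simp [polyEval_fin_three, h₁, h₂]))
    have one_eq_zero_of_two_ne_zero (h₂ : c 2 ≠ 0) : c 1 = 0 := by
      have root_eq_zero : c 1 / c 2 = 0 := hc <| by
        simp only [polyEval_fin_three]
        field_simp
        linear_combination c 1 ^ 2 * CharTwo.two_eq_zero (R := F)
      simpa [h₂] using root_eq_zero
    exact ⟨fun h₁ h₂ => not_both_zero ⟨h₁, h₂⟩, one_eq_zero_of_two_ne_zero⟩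
  · intro hc x y hxy
    simp only [polyEval_fin_three] at hxy
    by_cases h₁ : c 1 = 0
    · refine CharTwo.sq_inj.mp (mul_left_cancel₀ (hc.mp h₁) ?_)
      simpa [h₁] using hxy
    · have h₂ : c 2 = 0 := not_not.mp (mt hc.mpr h₁)
      simpa [h₁, h₂] using hxy

theorem exists_polyEval_fin_three_eq_zero [Finite F] {c : Fin 3 → F} (hc : c 1 = 0 ↔ c 2 ≠ 0) :
    ∃ a, polyEval c a = 0 :=
  Finite.injective_iff_surjective.mp (injective_polyEval_fin_three_iff.mpr hc) 0

theorem isLPP_bipolyEval_iff [Finite F] {s : Matrix (Fin 3) (Fin 3) F} :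
    IsLPP (bipolyEval s) ↔
      ComplementaryZeros (s 1) (s 2) ∧ ComplementaryZeros (sᵀ 1) (sᵀ 2) := by
  have rows (t : Matrix (Fin 3) (Fin 3) F) :
      (∀ a, Bijective fun x => bipolyEval t (x, a)) ↔ ComplementaryZeros (t 1) (t 2) :=
    forall_congr' fun a => Finite.injective_iff_bijective.symm.trans
      (injective_polyEval_fin_three_iff (c := fun i => polyEval (t i) a))
  simp only [IsLPP, forall_and, ← rows, bipolyEval_transpose]

end CharTwo

section FieldWithFourElements

noncomputable instance : Fintype F₄ := Fintype.ofFinite F₄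

theorem card_F₄ : Fintype.card F₄ = 4 := by
  rw [Fintype.card_eq_nat_card, GaloisField.card 2 2 two_ne_zero]
  norm_num

theorem pow_four_F₄ (a : F₄) : a ^ 4 = a := by
  simpa only [card_F₄] using FiniteField.pow_card a

theorem pow_three_eq_one_iff {a : F₄} : a ^ 3 = 1 ↔ a ≠ 0 := by
  refine ⟨?_, fun ha => by simpa [card_F₄] using FiniteField.pow_card_sub_one_eq_one a ha⟩
  rintro h rfl
  simp at h

theorem pow_three_add_pow_three_eq_one_iff {a b : F₄} :
    a ^ 3 + b ^ 3 = 1 ↔ (a = 0 ↔ b ≠ 0) := by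
  by_cases ha : a = 0 <;> by_cases hb : b = 0 <;>
    simp [ha, hb, pow_three_eq_one_iff.mpr, CharTwo.add_self_eq_zero]

theorem ComplementaryZeros.product_coeffs_eq_zero {c d : Fin 3 → F₄}
    (h : ComplementaryZeros c d) :
    c 0 * d 0 = 0 ∧ c 0 * d 1 + c 1 * d 0 + c 2 * d 2 = 0 ∧
      c 0 * d 2 + c 1 * d 1 + c 2 * d 0 = 0 ∧ c 1 * d 2 + c 2 * d 1 = 0 := by
  have product_eq_zero (a : F₄) : polyEval c a * polyEval d a = 0 :=
    mul_eq_zero.mpr (or_iff_not_imp_right.mpr (h a).mpr)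
  have reduced_eq_zero : ![c 0 * d 0, c 0 * d 1 + c 1 * d 0 + c 2 * d 2,
      c 0 * d 2 + c 1 * d 1 + c 2 * d 0, c 1 * d 2 + c 2 * d 1] = 0 := by
    refine polyEval_injective card_F₄.ge (funext fun a => ?_)
    have product_at_a := product_eq_zero a
    simp only [polyEval_fin_three] at product_at_a
    simp only [polyEval_fin_four, cons_val, Pi.zero_apply]
    linear_combination product_at_a - c 2 * d 2 * pow_four_F₄ a
  simpa [funext_iff, Fin.forall_fin_succ] using reduced_eq_zero

variable {s : Matrix (Fin 3) (Fin 3) F₄}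

/-- The coefficient matrices of type (i): only the first row and the first column are nonzero, and
they satisfy the cubic conditions of `TypeI`. -/
def typeICoeffs : Set (Matrix (Fin 3) (Fin 3) F₄) :=
  {s | s 0 1 ^ 3 + s 0 2 ^ 3 = 1 ∧ s 1 0 ^ 3 + s 2 0 ^ 3 = 1 ∧
    s 1 1 = 0 ∧ s 1 2 = 0 ∧ s 2 1 = 0 ∧ s 2 2 = 0}

/-- The coefficient matrices of type (ii): the entries `s 1 1`, `s 1 0` and `s 0 1` are determined
by the others, which satisfy the conditions of `TypeII`. -/
def typeIICoeffs : Set (Matrix (Fin 3) (Fin 3) F₄) :=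
  {s | s 2 2 ^ 3 = 1 ∧ s 2 1 ^ 3 = 1 ∧ s 1 2 ^ 3 = 1 ∧
    s 2 0 * (s 2 0 * s 2 2 + s 2 1 ^ 2) = 0 ∧ s 0 2 * (s 0 2 * s 2 2 + s 1 2 ^ 2) = 0 ∧
    s 1 1 = s 1 2 * s 2 1 * s 2 2 ^ 2 ∧
    s 1 0 = (s 2 0 * s 2 2 + s 2 1 ^ 2) * s 1 2 * s 2 2 ∧
    s 0 1 = (s 0 2 * s 2 2 + s 1 2 ^ 2) * s 2 1 * s 2 2}

/-- The matrix of type (i) with the given free entries. -/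
noncomputable def typeIMatrix (s₀₀ s₀₁ s₀₂ s₁₀ s₂₀ : F₄) : Matrix (Fin 3) (Fin 3) F₄ :=
  !![s₀₀, s₀₁, s₀₂; s₁₀, 0, 0; s₂₀, 0, 0]

/-- The matrix of type (ii) with the given free entries. -/
noncomputable def typeIIMatrix (s₀₀ s₀₂ s₁₂ s₂₀ s₂₁ s₂₂ : F₄) :
    Matrix (Fin 3) (Fin 3) F₄ :=
  !![s₀₀, (s₀₂ * s₂₂ + s₁₂ ^ 2) * s₂₁ * s₂₂, s₀₂;
    (s₂₀ * s₂₂ + s₂₁ ^ 2) * s₁₂ * s₂₂, s₁₂ * s₂₁ * s₂₂ ^ 2, s₁₂;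
    s₂₀, s₂₁, s₂₂]

theorem typeIMatrix_mem_typeICoeffs {s₀₀ s₀₁ s₀₂ s₁₀ s₂₀ : F₄} (hcol : s₀₁ ^ 3 + s₀₂ ^ 3 = 1)
    (hrow : s₁₀ ^ 3 + s₂₀ ^ 3 = 1) : typeIMatrix s₀₀ s₀₁ s₀₂ s₁₀ s₂₀ ∈ typeICoeffs :=
  ⟨hcol, hrow, rfl, rfl, rfl, rfl⟩

theorem typeIIMatrix_mem_typeIICoeffs {s₀₀ s₀₂ s₁₂ s₂₀ s₂₁ s₂₂ : F₄} (h₂₂ : s₂₂ ^ 3 = 1)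
    (h₂₁ : s₂₁ ^ 3 = 1) (h₁₂ : s₁₂ ^ 3 = 1) (hrow : s₂₀ * (s₂₀ * s₂₂ + s₂₁ ^ 2) = 0)
    (hcol : s₀₂ * (s₀₂ * s₂₂ + s₁₂ ^ 2) = 0) :
    typeIIMatrix s₀₀ s₀₂ s₁₂ s₂₀ s₂₁ s₂₂ ∈ typeIICoeffs :=
  ⟨h₂₂, h₂₁, h₁₂, hrow, hcol, rfl, rfl, rfl⟩

theorem eq_typeIMatrix_of_mem_typeICoeffs (hs : s ∈ typeICoeffs) :
    s = typeIMatrix (s 0 0) (s 0 1) (s 0 2) (s 1 0) (s 2 0) := by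
  obtain ⟨-, -, h₁₁, h₁₂, h₂₁, h₂₂⟩ := hs
  simpa only [typeIMatrix, h₁₁, h₁₂, h₂₁, h₂₂] using s.eta_fin_three

theorem eq_typeIIMatrix_of_mem_typeIICoeffs (hs : s ∈ typeIICoeffs) :
    s = typeIIMatrix (s 0 0) (s 0 2) (s 1 2) (s 2 0) (s 2 1) (s 2 2) := by
  obtain ⟨-, -, -, -, -, h₁₁, h₁₀, h₀₁⟩ := hs
  simpa only [typeIIMatrix, h₁₁, h₁₀, h₀₁] using s.eta_fin_three

theorem typeIIMatrix_inj {s₀₀ s₀₂ s₁₂ s₂₀ s₂₁ s₂₂ t₀₀ t₀₂ t₁₂ t₂₀ t₂₁ t₂₂ : F₄} :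
    typeIIMatrix s₀₀ s₀₂ s₁₂ s₂₀ s₂₁ s₂₂ = typeIIMatrix t₀₀ t₀₂ t₁₂ t₂₀ t₂₁ t₂₂ ↔
      s₀₀ = t₀₀ ∧ s₀₂ = t₀₂ ∧ s₁₂ = t₁₂ ∧ s₂₀ = t₂₀ ∧ s₂₁ = t₂₁ ∧ s₂₂ = t₂₂ := by
  constructor
  · intro h
    exact ⟨congrFun₂ h 0 0, congrFun₂ h 0 2, congrFun₂ h 1 2, congrFun₂ h 2 0, congrFun₂ h 2 1,
      congrFun₂ h 2 2⟩
  · rintro ⟨rfl, rfl, rfl, rfl, rfl, rfl⟩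
    rfl

theorem bipolyEval_typeIMatrix (s₀₀ s₀₁ s₀₂ s₁₀ s₂₀ x y : F₄) :
    bipolyEval (typeIMatrix s₀₀ s₀₁ s₀₂ s₁₀ s₂₀) (x, y) =
      s₂₀ * x ^ 2 + s₀₂ * y ^ 2 + s₁₀ * x + s₀₁ * y + s₀₀ := by
  simp only [bipolyEval, polyEval_fin_three, typeIMatrix, of_apply, cons_val]
  ring

theorem bipolyEval_typeIIMatrix (s₀₀ s₀₂ s₁₂ s₂₀ s₂₁ s₂₂ x y : F₄) :
    bipolyEval (typeIIMatrix s₀₀ s₀₂ s₁₂ s₂₀ s₂₁ s₂₂) (x, y) =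
      (s₂₂ * x * y + s₂₁ * x + s₁₂ * y + s₁₂ * s₂₁ * s₂₂ ^ 2) * x * y +
        s₂₀ * x ^ 2 + s₀₂ * y ^ 2 + (s₂₀ * s₂₂ + s₂₁ ^ 2) * s₁₂ * s₂₂ * x +
        (s₀₂ * s₂₂ + s₁₂ ^ 2) * s₂₁ * s₂₂ * y + s₀₀ := by
  simp only [bipolyEval, polyEval_fin_three, typeIIMatrix, of_apply, cons_val]
  ring

theorem typeI_iff {f : F₄ × F₄ → F₄} : TypeI f ↔ f ∈ bipolyEval '' typeICoeffs := by
  constructor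
  · rintro ⟨s₀₀, s₀₁, s₀₂, s₁₀, s₂₀, hcol, hrow, hf⟩
    exact ⟨_, typeIMatrix_mem_typeICoeffs hcol hrow,
      funext fun (x, y) => (bipolyEval_typeIMatrix s₀₀ ..).trans (hf x y).symm⟩
  · rintro ⟨s, hs, rfl⟩
    rw [eq_typeIMatrix_of_mem_typeICoeffs hs]
    exact ⟨_, _, _, _, _, hs.1, hs.2.1, bipolyEval_typeIMatrix _ _ _ _ _⟩

theorem typeII_iff {f : F₄ × F₄ → F₄} : TypeII f ↔ f ∈ bipolyEval '' typeIICoeffs := by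
  constructor
  · rintro ⟨s₀₀, s₀₂, s₁₂, s₂₀, s₂₁, s₂₂, h₂₂, h₂₁, h₁₂, hrow, hcol, hf⟩
    exact ⟨_, typeIIMatrix_mem_typeIICoeffs h₂₂ h₂₁ h₁₂ hrow hcol,
      funext fun (x, y) => (bipolyEval_typeIIMatrix s₀₀ ..).trans (hf x y).symm⟩
  · rintro ⟨s, hs, rfl⟩
    have ⟨h₂₂, h₂₁, h₁₂, hrow, hcol, _⟩ := hs
    rw [eq_typeIIMatrix_of_mem_typeIICoeffs hs]
    exact ⟨_, _, _, _, _, _, h₂₂, h₂₁, h₁₂, hrow, hcol, bipolyEval_typeIIMatrix _ _ _ _ _ _⟩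

theorem disjoint_typeICoeffs_typeIICoeffs : Disjoint typeICoeffs typeIICoeffs :=
  Set.disjoint_left.mpr fun _ ⟨_, _, _, _, _, h₂₂⟩ h =>
    pow_three_eq_one_iff.mp h.1 h₂₂

theorem transpose_mem_typeICoeffs (hs : s ∈ typeICoeffs) : sᵀ ∈ typeICoeffs :=
  let ⟨hcol, hrow, h₁₁, h₁₂, h₂₁, h₂₂⟩ := hs
  ⟨hrow, hcol, h₁₁, h₂₁, h₁₂, h₂₂⟩

theorem transpose_mem_typeIICoeffs (hs : s ∈ typeIICoeffs) : sᵀ ∈ typeIICoeffs :=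
  let ⟨h₂₂, h₂₁, h₁₂, hrow, hcol, h₁₁, h₁₀, h₀₁⟩ := hs
  ⟨h₂₂, h₁₂, h₂₁, hcol, hrow, by simp [h₁₁, mul_comm], h₀₁, h₁₀⟩

theorem complementaryZeros_of_mem_typeICoeffs (hs : s ∈ typeICoeffs) :
    ComplementaryZeros (s 1) (s 2) := by
  obtain ⟨-, hrow, h₁₁, h₁₂, h₂₁, h₂₂⟩ := hs
  intro a
  simpa [polyEval_fin_three, h₁₁, h₁₂, h₂₁, h₂₂] using pow_three_add_pow_three_eq_one_iff.mp hrow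

theorem complementaryZeros_of_mem_typeIICoeffs (hs : s ∈ typeIICoeffs) :
    ComplementaryZeros (s 1) (s 2) := by
  obtain ⟨h₂₂, h₂₁, h₁₂, hrow, -, h₁₁, h₁₀, -⟩ := hs
  intro a
  have weighted_sum_eq :
      s 2 2 * polyEval (s 1) a + s 1 2 * polyEval (s 2) a = s 1 2 * (s 2 1 * s 2 2) ^ 2 := by
    simp only [polyEval_fin_three, h₁₁, h₁₀]
    grind
  have product_eq_zero : polyEval (s 1) a * polyEval (s 2) a = 0 := by
    simp only [polyEval_fin_three, h₁₁, h₁₀]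
    grind [pow_four_F₄ a]
  have weighted_sum_ne_zero : s 1 2 * (s 2 1 * s 2 2) ^ 2 ≠ 0 := by
    rw [pow_three_eq_one_iff] at h₂₂ h₂₁ h₁₂
    positivity
  refine ⟨fun h₁ h₂ => weighted_sum_ne_zero ?_, (mul_eq_zero.mp product_eq_zero).resolve_right⟩
  rw [← weighted_sum_eq, h₁, h₂, mul_zero, mul_zero, add_zero]

theorem isLPP_of_mem_typeICoeffs (hs : s ∈ typeICoeffs) : IsLPP (bipolyEval s) :=
  isLPP_bipolyEval_iff.mpr ⟨complementaryZeros_of_mem_typeICoeffs hs,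
    complementaryZeros_of_mem_typeICoeffs (transpose_mem_typeICoeffs hs)⟩

theorem isLPP_of_mem_typeIICoeffs (hs : s ∈ typeIICoeffs) : IsLPP (bipolyEval s) :=
  isLPP_bipolyEval_iff.mpr ⟨complementaryZeros_of_mem_typeIICoeffs hs,
    complementaryZeros_of_mem_typeIICoeffs (transpose_mem_typeIICoeffs hs)⟩

theorem entry_one_two_ne_zero_of_isLPP (hs : IsLPP (bipolyEval s)) (h₂₂ : s 2 2 ≠ 0) :
    s 1 2 ≠ 0 := by
  intro h₁₂
  obtain ⟨hrow, hcol⟩ := isLPP_bipolyEval_iff.mp hs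
  obtain ⟨-, -, -, row₃⟩ := hrow.product_coeffs_eq_zero
  obtain ⟨-, col₁, col₂, -⟩ := hcol.product_coeffs_eq_zero
  simp only [transpose_apply] at col₁ col₂
  have h₁₁ : s 1 1 = 0 := by simpa [h₁₂, h₂₂] using row₃
  have h₂₁ : s 2 1 = 0 := by simpa [h₁₁, h₁₂, h₂₂] using col₁
  have h₀₁ : s 0 1 = 0 := by simpa [h₁₂, h₂₁, h₂₂] using col₂
  obtain ⟨b, hb⟩ : ∃ b, polyEval (sᵀ 2) b = 0 :=
    exists_polyEval_fin_three_eq_zero (by simp [h₁₂, h₂₂])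
  exact (hcol b).mp (by simp [polyEval_fin_three, h₀₁, h₁₁, h₂₁]) hb

theorem entries_eq_zero_of_isLPP (hs : IsLPP (bipolyEval s)) (h₁₂ : s 1 2 = 0)
    (h₂₂ : s 2 2 = 0) : s 1 1 = 0 ∧ s 2 1 = 0 := by
  by_contra h
  obtain ⟨hrow, hcol⟩ := isLPP_bipolyEval_iff.mp hs
  obtain ⟨-, -, row₂, -⟩ := hrow.product_coeffs_eq_zero
  obtain ⟨-, col₁, col₂, -⟩ := hcol.product_coeffs_eq_zero
  simp only [transpose_apply] at col₁ col₂
  have h₁₁_or_h₂₁ : s 1 1 = 0 ∨ s 2 1 = 0 := by simpa [h₁₂, h₂₂] using row₂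
  have h₁₁_or_h₀₂ : s 1 1 = 0 ∨ s 0 2 = 0 := by simpa [h₁₂, h₂₂] using col₁
  have h₂₁_or_h₀₂ : s 2 1 = 0 ∨ s 0 2 = 0 := by simpa [h₁₂, h₂₂] using col₂
  have h₀₂ : s 0 2 = 0 := by tauto
  obtain ⟨b, hb⟩ : ∃ b, polyEval (sᵀ 1) b = 0 :=
    exists_polyEval_fin_three_eq_zero (by simp only [transpose_apply]; tauto)
  exact (hcol b).mp hb (by simp [polyEval_fin_three, h₀₂, h₁₂, h₂₂])

theorem mem_typeICoeffs_of_isLPP (hs : IsLPP (bipolyEval s)) (h₂₂ : s 2 2 = 0) :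
    s ∈ typeICoeffs := by
  obtain ⟨hrow, hcol⟩ := isLPP_bipolyEval_iff.mp hs
  obtain ⟨-, -, -, row₃⟩ := hrow.product_coeffs_eq_zero
  have h₁₂_or_h₂₁ : s 1 2 = 0 ∨ s 2 1 = 0 := by simpa [h₂₂] using row₃
  obtain ⟨h₁₁, h₁₂, h₂₁⟩ : s 1 1 = 0 ∧ s 1 2 = 0 ∧ s 2 1 = 0 := by
    rcases h₁₂_or_h₂₁ with h₁₂ | h₂₁
    · obtain ⟨h₁₁, h₂₁⟩ := entries_eq_zero_of_isLPP hs h₁₂ h₂₂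
      exact ⟨h₁₁, h₁₂, h₂₁⟩
    · obtain ⟨h₁₁, h₁₂⟩ := entries_eq_zero_of_isLPP (isLPP_bipolyEval_transpose.mpr hs) h₂₁ h₂₂
      exact ⟨h₁₁, h₁₂, h₂₁⟩
  refine ⟨pow_three_add_pow_three_eq_one_iff.mpr ?_, pow_three_add_pow_three_eq_one_iff.mpr ?_,
    h₁₁, h₁₂, h₂₁, h₂₂⟩
  · simpa [polyEval_fin_three] using hcol 0
  · simpa [polyEval_fin_three] using hrow 0

theorem entry_one_one_eq_of_isLPP (hs : IsLPP (bipolyEval s)) (h₂₂ : s 2 2 ≠ 0) :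
    s 1 1 = s 1 2 * s 2 1 * s 2 2 ^ 2 := by
  obtain ⟨-, -, -, row₃⟩ := (isLPP_bipolyEval_iff.mp hs).1.product_coeffs_eq_zero
  have cube : s 2 2 ^ 3 = 1 := pow_three_eq_one_iff.mpr h₂₂
  rw [CharTwo.add_eq_zero] at row₃
  linear_combination s 2 2 ^ 2 * row₃ - s 1 1 * cube

theorem entry_one_zero_eq_of_isLPP (hs : IsLPP (bipolyEval s)) (h₂₂ : s 2 2 ≠ 0) :
    s 1 0 = (s 2 0 * s 2 2 + s 2 1 ^ 2) * s 1 2 * s 2 2 := by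
  obtain ⟨-, -, row₂, -⟩ := (isLPP_bipolyEval_iff.mp hs).1.product_coeffs_eq_zero
  have cube : s 2 2 ^ 3 = 1 := pow_three_eq_one_iff.mpr h₂₂
  rw [add_assoc, CharTwo.add_eq_zero, entry_one_one_eq_of_isLPP hs h₂₂] at row₂
  linear_combination s 2 2 ^ 2 * row₂ + (s 1 2 * s 2 1 ^ 2 * s 2 2 - s 1 0) * cube

theorem quadratic_relation_of_isLPP (hs : IsLPP (bipolyEval s)) (h₂₂ : s 2 2 ≠ 0) :
    s 2 0 * (s 2 0 * s 2 2 + s 2 1 ^ 2) = 0 := by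
  obtain ⟨row₀, -⟩ := (isLPP_bipolyEval_iff.mp hs).1.product_coeffs_eq_zero
  have h₁₂ : s 1 2 ≠ 0 := entry_one_two_ne_zero_of_isLPP hs h₂₂
  rw [entry_one_zero_eq_of_isLPP hs h₂₂] at row₀
  simpa [h₁₂, h₂₂, or_comm] using row₀

theorem mem_typeIICoeffs_of_isLPP (hs : IsLPP (bipolyEval s)) (h₂₂ : s 2 2 ≠ 0) :
    s ∈ typeIICoeffs :=
  have hsT : IsLPP (bipolyEval sᵀ) := isLPP_bipolyEval_transpose.mpr hs
  ⟨pow_three_eq_one_iff.mpr h₂₂,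
    pow_three_eq_one_iff.mpr (entry_one_two_ne_zero_of_isLPP hsT h₂₂),
    pow_three_eq_one_iff.mpr (entry_one_two_ne_zero_of_isLPP hs h₂₂),
    quadratic_relation_of_isLPP hs h₂₂, quadratic_relation_of_isLPP hsT h₂₂,
    entry_one_one_eq_of_isLPP hs h₂₂,
    entry_one_zero_eq_of_isLPP hs h₂₂, entry_one_zero_eq_of_isLPP hsT h₂₂⟩

theorem isLPP_bipolyEval_iff_mem_union :
    IsLPP (bipolyEval s) ↔ s ∈ typeICoeffs ∪ typeIICoeffs := by
  refine ⟨fun hs => ?_, Or.rec isLPP_of_mem_typeICoeffs isLPP_of_mem_typeIICoeffs⟩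
  by_cases h₂₂ : s 2 2 = 0
  · exact Or.inl (mem_typeICoeffs_of_isLPP hs h₂₂)
  · exact Or.inr (mem_typeIICoeffs_of_isLPP hs h₂₂)

theorem bipolyEval_fin_three_injective :
    Injective (bipolyEval : Matrix (Fin 3) (Fin 3) F₄ → F₄ × F₄ → F₄) :=
  bipolyEval_injective (by simp [card_F₄]) (by simp [card_F₄])

theorem isLPP_iff_typeI_or_typeII {f : F₄ × F₄ → F₄} : IsLPP f ↔ TypeI f ∨ TypeII f := by
  rw [typeI_iff, typeII_iff, ← Set.mem_union, ← Set.image_union]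
  constructor
  · intro hf
    obtain ⟨s, rfl⟩ := exists_bipolyEval_eq_of_isLPP card_F₄ (by norm_num) hf
    exact ⟨s, isLPP_bipolyEval_iff_mem_union.mp hf, rfl⟩
  · rintro ⟨s, hs, rfl⟩
    exact isLPP_bipolyEval_iff_mem_union.mpr hs

theorem not_typeI_and_typeII (f : F₄ × F₄ → F₄) : ¬(TypeI f ∧ TypeII f) := by
  rw [typeI_iff, typeII_iff]
  rintro ⟨hI, hII⟩
  exact ((Set.disjoint_image_iff bipolyEval_fin_three_injective).mpr
    disjoint_typeICoeffs_typeIICoeffs).notMem_of_mem_left hI hII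

theorem ncard_compl_zero : ({0}ᶜ : Set F₄).ncard = 3 := by
  rw [Set.ncard_compl, Set.ncard_singleton, Nat.card_eq_fintype_card, card_F₄]

theorem ncard_pow_three_add_pow_three_eq_one :
    {p : F₄ × F₄ | p.1 ^ 3 + p.2 ^ 3 = 1}.ncard = 6 := by
  have eq_union : {p : F₄ × F₄ | p.1 ^ 3 + p.2 ^ 3 = 1} = {0} ×ˢ {0}ᶜ ∪ {0}ᶜ ×ˢ {0} := by
    ext p
    simp only [Set.mem_ofPred_eq, pow_three_add_pow_three_eq_one_iff, Set.mem_union, Set.mem_prod,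
      Set.mem_singleton_iff, Set.mem_compl_iff]
    tauto
  have disjoint : Disjoint (({0} : Set F₄) ×ˢ ({0}ᶜ : Set F₄)) ({0}ᶜ ×ˢ {0}) :=
    Set.disjoint_prod.mpr (Or.inl disjoint_compl_right)
  rw [eq_union, Set.ncard_union_eq disjoint, Set.ncard_prod, Set.ncard_prod, ncard_compl_zero,
    Set.ncard_singleton]

theorem ncard_typeICoeffs : typeICoeffs.ncard = 144 := by
  let coeffs : F₄ × (F₄ × F₄) × F₄ × F₄ → Matrix (Fin 3) (Fin 3) F₄ :=
    fun (s₀₀, (s₀₁, s₀₂), s₁₀, s₂₀) => typeIMatrix s₀₀ s₀₁ s₀₂ s₁₀ s₂₀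
  have coeffs_injective : Injective coeffs := by
    rintro ⟨s₀₀, ⟨s₀₁, s₀₂⟩, s₁₀, s₂₀⟩ ⟨t₀₀, ⟨t₀₁, t₀₂⟩, t₁₀, t₂₀⟩ h
    simpa [coeffs, typeIMatrix, and_assoc] using h
  have eq_image : typeICoeffs =
      coeffs '' (Set.univ ×ˢ {p | p.1 ^ 3 + p.2 ^ 3 = 1} ×ˢ {p | p.1 ^ 3 + p.2 ^ 3 = 1}) := by
    ext s
    constructor
    · intro hs
      exact ⟨(s 0 0, (s 0 1, s 0 2), s 1 0, s 2 0), ⟨trivial, hs.1, hs.2.1⟩,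
        (eq_typeIMatrix_of_mem_typeICoeffs hs).symm⟩
    · rintro ⟨⟨s₀₀, ⟨s₀₁, s₀₂⟩, s₁₀, s₂₀⟩, ⟨-, hcol, hrow⟩, rfl⟩
      exact typeIMatrix_mem_typeICoeffs hcol hrow
  simp [eq_image, Set.ncard_image_of_injective _ coeffs_injective, Set.ncard_prod,
    ncard_pow_three_add_pow_three_eq_one, card_F₄]

theorem mul_mul_add_sq_eq_zero_iff {a b c : F₄} (hb : b ≠ 0) :
    a * (a * b + c ^ 2) = 0 ↔ ∃ ε ∈ ({0, 1} : Set F₄), ε * (b * c) ^ 2 = a := by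
  have cube : b ^ 3 = 1 := pow_three_eq_one_iff.mpr hb
  have root_iff : a * b + c ^ 2 = 0 ↔ (b * c) ^ 2 = a := by
    rw [CharTwo.add_eq_zero]
    constructor <;> intro h
    · linear_combination a * cube - b ^ 2 * h
    · linear_combination c ^ 2 * cube - b * h
  simp [root_iff, eq_comm]

/-- The matrices of type (ii) with `s 0 2` and `s 2 0` expressed through bits `δ, ε ∈ {0, 1}`,
which say whether these entries are nonzero. -/
noncomputable def typeIIMatrixOfBits : F₄ × F₄ × F₄ × F₄ × F₄ × F₄ → Matrix (Fin 3) (Fin 3) F₄ :=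
  fun (s₀₀, s₁₂, s₂₁, s₂₂, δ, ε) =>
    typeIIMatrix s₀₀ (δ * (s₂₂ * s₁₂) ^ 2) s₁₂ (ε * (s₂₂ * s₂₁) ^ 2) s₂₁ s₂₂

/-- The parameters at which `typeIIMatrixOfBits` is of type (ii). -/
def typeIIParams : Set (F₄ × F₄ × F₄ × F₄ × F₄ × F₄) :=
  Set.univ ×ˢ {0}ᶜ ×ˢ {0}ᶜ ×ˢ {0}ᶜ ×ˢ {0, 1} ×ˢ {0, 1}

theorem injOn_typeIIMatrixOfBits : Set.InjOn typeIIMatrixOfBits typeIIParams := by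
  rintro ⟨s₀₀, s₁₂, s₂₁, s₂₂, δ, ε⟩ ⟨-, h₁₂, h₂₁, h₂₂, -⟩ ⟨t₀₀, t₁₂, t₂₁, t₂₂, δ', ε'⟩ - h
  simp only [Set.mem_compl_iff, Set.mem_singleton_iff] at h₁₂ h₂₁ h₂₂
  obtain ⟨rfl, hδ, rfl, hε, rfl, rfl⟩ := typeIIMatrix_inj.mp h
  have δ_eq : δ = δ' := by simpa [h₁₂, h₂₂] using hδ
  have ε_eq : ε = ε' := by simpa [h₂₁, h₂₂] using hε
  rw [δ_eq, ε_eq]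

theorem image_typeIIMatrixOfBits : typeIIMatrixOfBits '' typeIIParams = typeIICoeffs := by
  ext s
  constructor
  · rintro ⟨⟨s₀₀, s₁₂, s₂₁, s₂₂, δ, ε⟩, ⟨-, h₁₂, h₂₁, h₂₂, hδ, hε⟩, rfl⟩
    exact typeIIMatrix_mem_typeIICoeffs (pow_three_eq_one_iff.mpr h₂₂)
      (pow_three_eq_one_iff.mpr h₂₁) (pow_three_eq_one_iff.mpr h₁₂)
      ((mul_mul_add_sq_eq_zero_iff h₂₂).mpr ⟨ε, hε, rfl⟩)
      ((mul_mul_add_sq_eq_zero_iff h₂₂).mpr ⟨δ, hδ, rfl⟩)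
  · intro hs
    have ⟨h₂₂, h₂₁, h₁₂, hrow, hcol, _⟩ := hs
    rw [pow_three_eq_one_iff] at h₂₂ h₂₁ h₁₂
    obtain ⟨ε, hε, h₂₀⟩ := (mul_mul_add_sq_eq_zero_iff h₂₂).mp hrow
    obtain ⟨δ, hδ, h₀₂⟩ := (mul_mul_add_sq_eq_zero_iff h₂₂).mp hcol
    refine ⟨(s 0 0, s 1 2, s 2 1, s 2 2, δ, ε), ⟨trivial, h₁₂, h₂₁, h₂₂, hδ, hε⟩, ?_⟩
    simpa only [typeIIMatrixOfBits, h₂₀, h₀₂] using (eq_typeIIMatrix_of_mem_typeIICoeffs hs).symm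

theorem ncard_typeIICoeffs : typeIICoeffs.ncard = 432 := by
  rw [← image_typeIIMatrixOfBits, injOn_typeIIMatrixOfBits.ncard_image]
  simp [typeIIParams, Set.ncard_prod, ncard_compl_zero, card_F₄]

end FieldWithFourElements

/-- A function `f : F₄ × F₄ → F₄` is an LPP if and only if
exactly one of Type (i) or Type (ii) holds; moreover there are exactly `144`
LPPs of type (i) and exactly `432` of type (ii). -/
theorem stmt_4 :
    (∀ f : F₄ × F₄ → F₄, IsLPP f ↔ Xor' (TypeI f) (TypeII f)) ∧
    Nat.card {f : F₄ × F₄ → F₄ | TypeI f} = 144 ∧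
    Nat.card {f : F₄ × F₄ → F₄ | TypeII f} = 432 := by
  have setOf_typeI : {f | TypeI f} = bipolyEval '' typeICoeffs := Set.ext fun _ => typeI_iff
  have setOf_typeII : {f | TypeII f} = bipolyEval '' typeIICoeffs := Set.ext fun _ => typeII_iff
  refine ⟨fun f => ?_, ?_, ?_⟩
  · calc IsLPP f ↔ TypeI f ∨ TypeII f := isLPP_iff_typeI_or_typeII
      _ ↔ (TypeI f ∨ TypeII f) ∧ ¬(TypeI f ∧ TypeII f) :=
        (and_iff_left (not_typeI_and_typeII f)).symm
      _ ↔ Xor (TypeI f) (TypeII f) := (xor_iff_or_and_not_and _ _).symm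
  · rw [Nat.card_coe_set_eq, setOf_typeI,
      Set.ncard_image_of_injective _ bipolyEval_fin_three_injective, ncard_typeICoeffs]
  · rw [Nat.card_coe_set_eq, setOf_typeII,
      Set.ncard_image_of_injective _ bipolyEval_fin_three_injective, ncard_typeIICoeffs]
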